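/- Let Q(t) be a discrete time queue with Q(t+1) = max[Q(t) − b(t), 0] + a(t), where a(t) ≥ 0 and b(t) is real-valued, defined on a probability space. Suppose Q(t) is rate stable, and suppose there exists a non-negative random variable Y with E[Y] < ∞ such that for all slots t and all real y, E[(a(t) + b⁻(t))·1{a(t) + b⁻(t) > y}] ≤ E[Y·1{Y > y}], where b⁻(t) = −min[b(t), 0]. Then Q(t) is mean rate stable. -/

import Mathlib

open MeasureTheory Filter Finset ENNReal

/-!
A queue grows in one slot by at most `a(t) + b⁻(t)`, so `Q(t)/t` is bounded by `Q(0)` plus the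
running average of these increments. Domination of their tails by an integrable variable makes the
increments uniformly integrable; averages inherit this, hence so does `Q(t)/t`. By Vitali's theorem
its convergence to `0` in probability then upgrades to convergence in `L¹`, which is mean rate
stability.
-/

section UniformIntegrability

variable {ι Ω Ω' : Type*} {mΩ : MeasurableSpace Ω} {mΩ' : MeasurableSpace Ω'}
  {μ : Measure Ω} {ν : Measure Ω'}

theorem unifIntegrable_of_norm_le {E F : Type*} [NormedAddCommGroup E] [NormedAddCommGroup F]
    {f : ι → Ω → E} {g : ι → Ω → F} {p : ℝ≥0∞} (hg : UnifIntegrable g p μ)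
    (hfg : ∀ i ω, ‖f i ω‖ ≤ ‖g i ω‖) : UnifIntegrable f p μ := by
  intro ε hε
  obtain ⟨δ, hδ, hgδ⟩ := hg hε
  refine ⟨δ, hδ, fun i s hs hμs => (eLpNorm_mono fun ω => ?_).trans (hgδ i s hs hμs)⟩
  rw [norm_indicator_eq_indicator_norm, norm_indicator_eq_indicator_norm]
  exact Set.indicator_le_indicator (hfg i ω)

theorem tendsto_measure_setOf_lt_atTop {Y : Ω' → ℝ} (hY : AEMeasurable Y ν)
    (hYfin : ∫⁻ ω, ENNReal.ofReal (Y ω) ∂ν ≠ ⊤) :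
    Tendsto (fun y : ℝ => ν {ω | y < Y ω}) atTop (nhds 0) := by
  have markov : ∀ᶠ y : ℝ in atTop,
      ν {ω | y < Y ω} ≤ (∫⁻ ω, ENNReal.ofReal (Y ω) ∂ν) / ENNReal.ofReal y := by
    filter_upwards [eventually_gt_atTop 0] with y hy
    calc ν {ω | y < Y ω} ≤ ν {ω | ENNReal.ofReal y ≤ ENNReal.ofReal (Y ω)} :=
          measure_mono fun _ hω => ENNReal.ofReal_le_ofReal (le_of_lt hω)
      _ ≤ _ := meas_ge_le_lintegral_div hY.ennreal_ofReal (ENNReal.ofReal_pos.2 hy).ne'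
          ofReal_ne_top
  have bound_tendsto : Tendsto
      (fun y : ℝ => (∫⁻ ω, ENNReal.ofReal (Y ω) ∂ν) / ENNReal.ofReal y) atTop (nhds 0) := by
    simpa only [ENNReal.div_top] using
      ENNReal.Tendsto.const_div ENNReal.tendsto_ofReal_atTop (Or.inr hYfin)
  exact tendsto_of_tendsto_of_tendsto_of_le_of_le' tendsto_const_nhds bound_tendsto
    (Eventually.of_forall fun _ => zero_le) markov

theorem tendsto_setLIntegral_setOf_lt_atTop {Y : Ω' → ℝ} (hY : AEMeasurable Y ν)
    (hYfin : ∫⁻ ω, ENNReal.ofReal (Y ω) ∂ν ≠ ⊤) :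
    Tendsto (fun y : ℝ => ∫⁻ ω in {ω | y < Y ω}, ENNReal.ofReal (Y ω) ∂ν) atTop (nhds 0) :=
  tendsto_setLIntegral_zero hYfin (tendsto_measure_setOf_lt_atTop hY hYfin)

theorem eLpNorm_one_indicator_le_setLIntegral_ofReal {X : Ω → ℝ} (hX : ∀ ω, 0 ≤ X ω)
    {s t : Set Ω} (hst : s ⊆ t) :
    eLpNorm (s.indicator X) 1 μ ≤ ∫⁻ ω in t, ENNReal.ofReal (X ω) ∂μ :=
  calc eLpNorm (s.indicator X) 1 μ = ∫⁻ ω, s.indicator (fun ω => ENNReal.ofReal (X ω)) ω ∂μ := by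
        simp only [eLpNorm_one_eq_lintegral_enorm, enorm_indicator_eq_indicator_enorm,
          Real.enorm_of_nonneg (hX _)]
    _ ≤ ∫⁻ ω in s, ENNReal.ofReal (X ω) ∂μ := lintegral_indicator_le _ s
    _ ≤ ∫⁻ ω in t, ENNReal.ofReal (X ω) ∂μ := lintegral_mono_set hst

theorem uniformIntegrable_of_setLIntegral_tail_le [IsFiniteMeasure μ] {X : ι → Ω → ℝ}
    {Y : Ω' → ℝ} (hXmeas : ∀ i, AEStronglyMeasurable (X i) μ) (hX : ∀ i ω, 0 ≤ X i ω)
    (hY : AEMeasurable Y ν) (hYfin : ∫⁻ ω, ENNReal.ofReal (Y ω) ∂ν ≠ ⊤)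
    (hdom : ∀ i, ∀ y : ℝ, ∫⁻ ω in {ω | y < X i ω}, ENNReal.ofReal (X i ω) ∂μ
      ≤ ∫⁻ ω in {ω | y < Y ω}, ENNReal.ofReal (Y ω) ∂ν) :
    UniformIntegrable X 1 μ := by
  refine uniformIntegrable_of le_rfl one_ne_top hXmeas fun ε hε => ?_
  obtain ⟨y, hYy⟩ := (ENNReal.tendsto_nhds_zero.1 (tendsto_setLIntegral_setOf_lt_atTop hY hYfin)
    (ENNReal.ofReal ε) (ENNReal.ofReal_pos.2 hε)).exists
  -- The library truncates at `C ≤ ‖X‖`, the hypothesis at `y < X`; hence the shift by one.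
  refine ⟨(y + 1).toNNReal, fun i => ?_⟩
  have truncation_subset : {ω | (y + 1).toNNReal ≤ ‖X i ω‖₊} ⊆ {ω | y < X i ω} := by
    intro ω hω
    have hω' : y + 1 ≤ ‖X i ω‖ := Real.toNNReal_le_iff_le_coe.1 hω
    rw [Real.norm_of_nonneg (hX i ω)] at hω'
    exact (lt_add_one y).trans_le hω'
  exact (eLpNorm_one_indicator_le_setLIntegral_ofReal (hX i) truncation_subset).trans
    ((hdom i y).trans hYy)

end UniformIntegrability

section BoundedIncrements

theorem le_add_sum_range_of_succ_le_add {M : Type*} [AddCommMonoid M] [PartialOrder M]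
    [IsOrderedAddMonoid M] {q x : ℕ → M} (h : ∀ t, q (t + 1) ≤ q t + x t) (t : ℕ) :
    q t ≤ q 0 + ∑ s ∈ range t, x s := by
  induction t with
  | zero => simp
  | succ t ih =>
    rw [sum_range_succ, ← add_assoc]
    exact (h t).trans (add_le_add_left ih _)

variable {Ω : Type*} {mΩ : MeasurableSpace Ω} {μ : Measure Ω} {Q X : ℕ → Ω → ℝ}

theorem unifIntegrable_div_natCast_of_succ_le_add {p : ℝ≥0∞} (hp : 1 ≤ p) (hp_top : p ≠ ⊤)
    (hX : UniformIntegrable X p μ) (hQ0 : MemLp (Q 0) p μ) (hQ : ∀ t ω, 0 ≤ Q t ω)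
    (hsucc : ∀ t ω, Q (t + 1) ω ≤ Q t ω + X t ω) :
    UnifIntegrable (fun t ω => Q t ω / t) p μ := by
  have average := uniformIntegrable_average_real hp hX
  have hbound := (unifIntegrable_const (ι := ℕ) hp hp_top hQ0).add average.unifIntegrable hp
    (fun _ => hQ0.aestronglyMeasurable) average.aestronglyMeasurable
  refine unifIntegrable_of_norm_le hbound fun t ω => ?_
  rw [Real.norm_of_nonneg (div_nonneg (hQ t ω) t.cast_nonneg)]
  refine le_trans ?_ (Real.le_norm_self _)
  calc Q t ω / t ≤ (Q 0 ω + ∑ s ∈ range t, X s ω) / t := by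
        gcongr
        exact le_add_sum_range_of_succ_le_add (q := (Q · ω)) (x := (X · ω)) (hsucc · ω) t
    _ = Q 0 ω / t + (∑ s ∈ range t, X s ω) / t := add_div _ _ _
    _ ≤ Q 0 ω + (∑ s ∈ range t, X s ω) / t := by
        gcongr
        exact div_nat_le_self_of_nonnneg (hQ 0 ω) t
    _ = _ := by simp

theorem eLpNorm_one_div_const {f : Ω → ℝ} (hf : ∀ ω, 0 ≤ f ω) {c : ℝ} (hc : 0 < c) :
    eLpNorm (fun ω => f ω / c) 1 μ = (∫⁻ ω, ENNReal.ofReal (f ω) ∂μ) / ENNReal.ofReal c := by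
  have hc_inv : (ENNReal.ofReal c)⁻¹ ≠ ⊤ := ENNReal.inv_ne_top.2 (ENNReal.ofReal_pos.2 hc).ne'
  calc eLpNorm (fun ω => f ω / c) 1 μ = ∫⁻ ω, ENNReal.ofReal (f ω / c) ∂μ := by
        simp only [eLpNorm_one_eq_lintegral_enorm, Real.enorm_of_nonneg (div_nonneg (hf _) hc.le)]
    _ = (∫⁻ ω, ENNReal.ofReal (f ω) ∂μ) / ENNReal.ofReal c := by
        simp_rw [ENNReal.ofReal_div_of_pos hc, div_eq_mul_inv]
        exact lintegral_mul_const' _ _ hc_inv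

theorem tendsto_lintegral_div_natCast_of_succ_le_add [IsFiniteMeasure μ]
    (hQmeas : ∀ t, AEStronglyMeasurable (Q t) μ) (hX : UniformIntegrable X 1 μ)
    (hQ0 : Integrable (Q 0) μ) (hQ : ∀ t ω, 0 ≤ Q t ω)
    (hsucc : ∀ t ω, Q (t + 1) ω ≤ Q t ω + X t ω)
    (hrate : TendstoInMeasure μ (fun (t : ℕ) ω => Q t ω / t) atTop 0) :
    Tendsto (fun t : ℕ => (∫⁻ ω, ENNReal.ofReal (Q t ω) ∂μ) / (t : ℝ≥0∞)) atTop (nhds 0) := by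
  have vitali : Tendsto (fun t : ℕ => eLpNorm ((fun ω => Q t ω / t) - 0) 1 μ) atTop (nhds 0) :=
    tendsto_Lp_finite_of_tendstoInMeasure le_rfl one_ne_top
      (fun t => ((hQmeas t).aemeasurable.div_const _).aestronglyMeasurable) MemLp.zero
      (unifIntegrable_div_natCast_of_succ_le_add le_rfl one_ne_top hX
        (memLp_one_iff_integrable.2 hQ0) hQ hsucc) hrate
  refine vitali.congr' ?_
  filter_upwards [eventually_gt_atTop 0] with t ht
  have ht' : (0 : ℝ) < t := by positivity
  rw [sub_zero, eLpNorm_one_div_const (hQ t) ht', ENNReal.ofReal_natCast]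

end BoundedIncrements

section Queue

variable {q a b : ℕ → ℝ}

theorem queue_nonneg (hq0 : 0 ≤ q 0) (ha : ∀ t, 0 ≤ a t)
    (hrec : ∀ t, q (t + 1) = max (q t - b t) 0 + a t) : ∀ t, 0 ≤ q t
  | 0 => hq0
  | t + 1 => hrec t ▸ add_nonneg (le_max_right _ _) (ha t)

theorem queue_succ_le_add (hq0 : 0 ≤ q 0) (ha : ∀ t, 0 ≤ a t)
    (hrec : ∀ t, q (t + 1) = max (q t - b t) 0 + a t) (t : ℕ) :
    q (t + 1) ≤ q t + (a t - min (b t) 0) := by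
  have service_le : max (q t - b t) 0 ≤ q t - min (b t) 0 :=
    max_le (sub_le_sub_left (min_le_left _ _) _)
      (sub_nonneg.2 ((min_le_right _ _).trans (queue_nonneg hq0 ha hrec t)))
  rw [hrec]
  linarith

end Queue

theorem stmt2_general {Ω : Type*} [MeasurableSpace Ω] (μ : Measure Ω) [IsFiniteMeasure μ]
    (Q a b : ℕ → Ω → ℝ) (hQmeas : ∀ t, AEStronglyMeasurable (Q t) μ)
    (hQ0 : ∀ ω, 0 ≤ Q 0 ω) (hQ0int : Integrable (Q 0) μ) (ha : ∀ t ω, 0 ≤ a t ω)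
    (hrec : ∀ t ω, Q (t + 1) ω = max (Q t ω - b t ω) 0 + a t ω)
    (hrate : TendstoInMeasure μ (fun (t : ℕ) ω => Q t ω / t) atTop 0)
    (hincr : UniformIntegrable (fun t ω => a t ω - min (b t ω) 0) 1 μ) :
    Tendsto (fun t : ℕ => (∫⁻ ω, ENNReal.ofReal (Q t ω) ∂μ) / (t : ℝ≥0∞)) atTop (nhds 0) :=
  tendsto_lintegral_div_natCast_of_succ_le_add hQmeas hincr hQ0int
    (fun t ω => queue_nonneg (q := (Q · ω)) (hQ0 ω) (ha · ω) (hrec · ω) t)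
    (fun t ω => queue_succ_le_add (q := (Q · ω)) (hQ0 ω) (ha · ω) (hrec · ω) t) hrate

/-- Rate stability plus stochastic domination of the tails of
`a(t) + b⁻(t)` (where `b⁻(t) = -min[b(t),0]`) by an integrable nonnegative
random variable `Y`, in the sense that
`E[(a(t)+b⁻(t))·1{a(t)+b⁻(t) > y}] ≤ E[Y·1{Y > y}]` for all `t` and all real `y`,
implies mean rate stability. -/
theorem stmt2 {Ω : Type*} [MeasurableSpace Ω] (μ : Measure Ω) [IsProbabilityMeasure μ]
    (Q a b : ℕ → Ω → ℝ)
    (hQmeas : ∀ t, Measurable (Q t))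
    (hameas : ∀ t, Measurable (a t)) (hbmeas : ∀ t, Measurable (b t))
    (hQ0 : ∀ ω, Q 0 ω = 0) (ha : ∀ t ω, 0 ≤ a t ω)
    (hrec : ∀ t ω, Q (t + 1) ω = max (Q t ω - b t ω) 0 + a t ω)
    (hrate : ∀ᵐ ω ∂μ, Tendsto (fun t : ℕ => Q t ω / t) atTop (nhds 0))
    (Y : Ω → ℝ) (hYmeas : Measurable Y) (hYpos : ∀ ω, 0 ≤ Y ω)
    (hYfin : ∫⁻ ω, ENNReal.ofReal (Y ω) ∂μ < ⊤)
    (hdom : ∀ t, ∀ y : ℝ,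
      ∫⁻ ω in {ω | a t ω - min (b t ω) 0 > y}, ENNReal.ofReal (a t ω - min (b t ω) 0) ∂μ
        ≤ ∫⁻ ω in {ω | Y ω > y}, ENNReal.ofReal (Y ω) ∂μ) :
    Tendsto (fun t : ℕ => (∫⁻ ω, ENNReal.ofReal (Q t ω) ∂μ) / (t : ℝ≥0∞)) atTop (nhds 0) :=
  stmt2_general μ Q a b (fun t => (hQmeas t).aestronglyMeasurable) (fun ω => (hQ0 ω).ge)
    (funext hQ0 ▸ integrable_zero Ω ℝ μ) ha hrec
    (tendstoInMeasure_of_tendsto_ae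
      (fun t => ((hQmeas t).div_const (t : ℝ)).aestronglyMeasurable) hrate)
    (uniformIntegrable_of_setLIntegral_tail_le
      (fun t => ((hameas t).sub ((hbmeas t).min measurable_const)).aestronglyMeasurable)
      (fun t ω => sub_nonneg.2 ((min_le_right _ _).trans (ha t ω))) hYmeas.aemeasurable
      hYfin.ne hdom)
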